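/- arXiv:0906.3183 — 6 statements merged into one kernel-verified Lean document; each statement's English description precedes it below -/
import Mathlib

section
/- (Arithmetic content of Corollary 1: doubling-per-user approximation.) Let 1 ≥ D_1 ≥ D_2 ≥ ⋯ ≥ D_K > 0 satisfy the parametrized outer bound, and suppose moreover that D_k ≥ 2·D_{k+1} for k = 1,…,K−1 and that 2·D_1 ≤ 1. Then the vector (2·D_1, 2²·D_2, …, 2^K·D_K) lies in the separation-based inner-bound region 𝒟̂(P,b): that is, 1 ≥ 2D_1 ≥ 2²D_2 ≥ ⋯ ≥ 2^K D_K > 0 and ∑_{k=1}^K ΔN_k · (2^k·D_k)^{−1/b} ≤ P + N_1. -/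
/-!
The inequality is the outer bound specialized to the parameters `τ_k = D_k` for `k < K`, `τ_K = 0`.
Writing
`E_k = (1 + τ_k) / (D_1 + τ_1) · ∏_{j=2}^k (D_j + τ_{j-1}) / (D_j + τ_j)`
and using `τ_{j-1} = D_{j-1}` together with `D_j + τ_j ≤ 2 D_j`, each factor of the product is at
least `D_{j-1} / (2 D_j)`. The product telescopes, so that `E_k ≥ 1 / (2^k D_k)`
(`den_le_num_mul`, `inv_le_Efun`). Since `x ↦ x^{1/b}` is increasing and `ΔN_k ≥ 0`, the inner-bound
sum is dominated termwise by the outer-bound sum.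
-/
open Finset

/-- `E_k(D,τ) = (1+τ_k) ∏_{j=2}^k (D_j+τ_{j-1}) / ∏_{j=1}^k (D_j+τ_j)`. -/
noncomputable def Efun (D τ : ℕ → ℝ) (k : ℕ) : ℝ :=
  (1 + τ k) * (∏ j ∈ Finset.Icc 2 k, (D j + τ (j - 1))) /
    (∏ j ∈ Finset.Icc 1 k, (D j + τ j))

/-- The telescoped product estimate: up to the factor `1 + τ_k`, it says `E_k ≥ 1 / (2^k D_k)`. -/
theorem den_le_num_mul (K : ℕ) (D τ : ℕ → ℝ)
    (hD : ∀ k ∈ Icc 1 K, 0 < D k) (h0 : ∀ k ∈ Icc 1 K, 0 ≤ τ k)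
    (hle : ∀ k ∈ Icc 1 K, τ k ≤ D k) (heq : ∀ k, k < K → τ k = D k)
    (k : ℕ) (hk : 1 ≤ k) (hkK : k ≤ K) :
    ∏ j ∈ Icc 1 k, (D j + τ j) ≤ (∏ j ∈ Icc 2 k, (D j + τ (j - 1))) * (2 ^ k * D k) := by
  induction k, hk using Nat.le_induction with
  | base =>
    have h := hle 1 (mem_Icc.2 ⟨le_rfl, hkK⟩)
    simp
    linarith
  | succ k hk ih =>
    have ih := ih (by omega)
    have hm : k + 1 ∈ Icc 1 K := mem_Icc.2 ⟨by omega, hkK⟩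
    have hm' : k ∈ Icc 1 K := mem_Icc.2 ⟨hk, by omega⟩
    have hnum : 0 ≤ ∏ j ∈ Icc 2 k, (D j + τ (j - 1)) := by
      refine prod_nonneg fun j hj => ?_
      rw [mem_Icc] at hj
      have h1 := hD j (mem_Icc.2 ⟨by omega, by omega⟩)
      have h2 := h0 (j - 1) (mem_Icc.2 ⟨by omega, by omega⟩)
      linarith
    rw [prod_Icc_succ_top (by omega), prod_Icc_succ_top (by omega), Nat.add_sub_cancel,
      heq k (by omega)]
    set A := ∏ j ∈ Icc 2 k, (D j + τ (j - 1))
    have hd := hD _ hm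
    have hdk := hD _ hm'
    have ht := h0 _ hm
    have htd := hle _ hm
    calc (∏ j ∈ Icc 1 k, (D j + τ j)) * (D (k + 1) + τ (k + 1))
        ≤ (A * (2 ^ k * D k)) * (2 * D (k + 1)) :=
          mul_le_mul ih (by linarith) (by linarith) (by positivity)
      _ = (A * D k) * (2 ^ (k + 1) * D (k + 1)) := by ring
      _ ≤ (A * (D (k + 1) + D k)) * (2 ^ (k + 1) * D (k + 1)) := by
          gcongr
          linarith

theorem inv_le_Efun (K : ℕ) (D τ : ℕ → ℝ)
    (hD : ∀ k ∈ Icc 1 K, 0 < D k) (h0 : ∀ k ∈ Icc 1 K, 0 ≤ τ k)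
    (hle : ∀ k ∈ Icc 1 K, τ k ≤ D k) (heq : ∀ k, k < K → τ k = D k)
    (k : ℕ) (hk : k ∈ Icc 1 K) :
    (2 ^ k * D k)⁻¹ ≤ Efun D τ k := by
  obtain ⟨hk1, hkK⟩ := mem_Icc.1 hk
  have key := den_le_num_mul K D τ hD h0 hle heq k hk1 hkK
  have hden : 0 < ∏ j ∈ Icc 1 k, (D j + τ j) := by
    refine prod_pos fun j hj => ?_
    rw [mem_Icc] at hj
    have hj' : j ∈ Icc 1 K := mem_Icc.2 ⟨hj.1, hj.2.trans hkK⟩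
    linarith [hD j hj', h0 j hj']
  have hx : 0 < 2 ^ k * D k := mul_pos (by positivity) (hD k hk)
  have hnum : 0 ≤ ∏ j ∈ Icc 2 k, (D j + τ (j - 1)) :=
    (pos_of_mul_pos_left (hden.trans_le key) hx.le).le
  unfold Efun
  rw [inv_eq_one_div, div_le_div_iff₀ hx hden, one_mul]
  refine key.trans ?_
  gcongr
  exact le_mul_of_one_le_left hnum (by linarith [h0 k hk])

/-- **Arithmetic content of Corollary 1 (doubling-per-user approximation).**
If `1 ≥ D_1 ≥ ⋯ ≥ D_K > 0` satisfies the parametrized outer bound, `D_k ≥ 2 D_{k+1}` for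
`k < K`, and `2 D_1 ≤ 1`, then the vector `(2 D_1, 2² D_2, …, 2^K D_K)` lies in the
separation-based inner-bound region `𝒟̂(P,b)`: it is in `(0,1]`, nonincreasing, and
`∑_{k=1}^K ΔN_k (2^k D_k)^{-1/b} ≤ P + N_1`. -/
theorem corollary_one_doubling
    (K : ℕ) (hK : 1 ≤ K)
    (N : ℕ → ℝ)
    (hNpos : ∀ k ∈ Finset.Icc 1 K, 0 < N k)
    (hNmono : ∀ k ∈ Finset.Icc 1 (K - 1), N (k + 1) ≤ N k)
    (hNlast : N (K + 1) = 0)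
    (P : ℝ) (hP : 0 ≤ P) (b : ℝ) (hb : 0 < b)
    (D : ℕ → ℝ)
    (hD1 : D 1 ≤ 1)
    (hDpos : ∀ k ∈ Finset.Icc 1 K, 0 < D k)
    (hDmono : ∀ k ∈ Finset.Icc 1 (K - 1), D (k + 1) ≤ D k)
    (hbound : ∀ τ : ℕ → ℝ, τ K = 0 →
      (∀ k ∈ Finset.Icc 1 (K - 1), τ (k + 1) ≤ τ k) →
      (∀ k ∈ Finset.Icc 1 K, 0 ≤ τ k) →
      ∑ k ∈ Finset.Icc 1 K, (N k - N (k + 1)) * (Efun D τ k) ^ (1 / b) ≤ P + N 1)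
    (hgap : ∀ k ∈ Finset.Icc 1 (K - 1), 2 * D (k + 1) ≤ D k)
    (h2D1 : 2 * D 1 ≤ 1) :
    (2 * D 1 ≤ 1) ∧
      (∀ k ∈ Finset.Icc 1 (K - 1), 2 ^ (k + 1) * D (k + 1) ≤ 2 ^ k * D k) ∧
      (∀ k ∈ Finset.Icc 1 K, 0 < 2 ^ k * D k) ∧
      ∑ k ∈ Finset.Icc 1 K, (N k - N (k + 1)) * ((2 : ℝ) ^ k * D k) ^ (-(1 / b)) ≤ P + N 1 := by
  have hpos : ∀ k ∈ Icc 1 K, 0 < 2 ^ k * D k := fun k hk => mul_pos (by positivity) (hDpos k hk)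
  refine ⟨h2D1, fun k hk => ?_, hpos, ?_⟩
  · calc 2 ^ (k + 1) * D (k + 1) = 2 ^ k * (2 * D (k + 1)) := by ring
      _ ≤ 2 ^ k * D k := by
        gcongr
        exact hgap k hk
  set τ : ℕ → ℝ := fun k => if k < K then D k else 0 with hτ
  have h0 : ∀ k ∈ Icc 1 K, 0 ≤ τ k := fun k hk => by
    simp only [hτ]
    split_ifs
    exacts [(hDpos k hk).le, le_rfl]
  have hle : ∀ k ∈ Icc 1 K, τ k ≤ D k := fun k hk => by
    simp only [hτ]
    split_ifs
    exacts [le_rfl, (hDpos k hk).le]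
  have heq : ∀ k, k < K → τ k = D k := fun k hk => if_pos hk
  refine le_trans (sum_le_sum fun k hk => ?_) (hbound τ (if_neg (lt_irrefl K)) (fun k hk => ?_) h0)
  · have hN : 0 ≤ N k - N (k + 1) := by
      obtain ⟨hk1, hkK⟩ := mem_Icc.1 hk
      rcases hkK.eq_or_lt with rfl | h
      · linarith [hNpos k hk]
      · linarith [hNmono k (mem_Icc.2 ⟨hk1, by omega⟩)]
    refine mul_le_mul_of_nonneg_left ?_ hN
    rw [Real.rpow_neg (hpos k hk).le, ← Real.inv_rpow (hpos k hk).le]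
    exact Real.rpow_le_rpow (inv_nonneg.2 (hpos k hk).le)
      (inv_le_Efun K D τ hDpos h0 hle heq k hk) (by positivity)
  · have hk' := mem_Icc.1 hk
    rw [heq k (by omega)]
    exact (hle (k + 1) (mem_Icc.2 ⟨by omega, by omega⟩)).trans (hDmono k hk)
end

section
/- (Arithmetic content of Corollary 3: K-fold approximation.) Let 1 ≥ D_1 ≥ D_2 ≥ ⋯ ≥ D_K > 0 satisfy the parametrized outer bound. Define d_k := min(1, K·D_k) for k = 1,…,K. Then (d_1,…,d_K) lies in the separation-based inner-bound region 𝒟̂(P,b): that is, 1 ≥ d_1 ≥ d_2 ≥ ⋯ ≥ d_K > 0 and ∑_{k=1}^K ΔN_k · d_k^{−1/b} ≤ P + N_1. -/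
/-!
The outer bound is applied at the single parameter choice `τ_k = (K - k) D_k`, for which
`D_j + τ_j = (K - j + 1) D_j`. It is enough that `E_k ≥ 1 / d_k = max (1, 1 / (K D_k))` for every `k`,
because the weights `ΔN_k` are nonnegative and `x ↦ x ^ (1 / b)` is increasing.

* `E_k ≥ 1 / (K D_k)`: bounding `D_j + τ_{j-1} ≥ τ_{j-1} = (K - j + 1) D_{j-1}` makes the product
  telescope, and `1 + τ_k ≥ 1` (`one_le_mul_Efun`).
* `E_k ≥ 1`: `E_1 ≥ 1` since `D_1 ≤ 1`, and `E_k` is nondecreasing in `k`, since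
  `(1 + τ_{k+1}) (D_{k+1} + τ_k) - (1 + τ_k) (D_{k+1} + τ_{k+1})
    = (τ_k - τ_{k+1}) (1 - D_{k+1}) ≥ 0` (`one_le_Efun`).
-/

open Finset

theorem Efun_one (D τ : ℕ → ℝ) : Efun D τ 1 = (1 + τ 1) / (D 1 + τ 1) := by
  simp [Efun]

theorem Efun_succ (D τ : ℕ → ℝ) (k : ℕ) (hk : 1 ≤ k) (h : 1 + τ k ≠ 0) :
    Efun D τ (k + 1) =
      Efun D τ k * ((1 + τ (k + 1)) * (D (k + 1) + τ k)
        / ((1 + τ k) * (D (k + 1) + τ (k + 1)))) := by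
  unfold Efun
  rw [Finset.prod_Icc_succ_top (by omega), Finset.prod_Icc_succ_top (by omega),
    Nat.add_sub_cancel]
  rw [div_mul_div_comm, ← mul_div_mul_left _ _ h]
  congr 1 <;> ring

/-- `E_k ≥ 1` for any nonincreasing nonnegative parameter, as long as `D ≤ 1`. -/
theorem one_le_Efun (K : ℕ) (D τ : ℕ → ℝ)
    (hpos : ∀ k ∈ Finset.Icc 1 K, 0 < D k) (hle : ∀ k ∈ Finset.Icc 1 K, D k ≤ 1)
    (hτ : ∀ k ∈ Finset.Icc 1 K, 0 ≤ τ k)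
    (hmono : ∀ k ∈ Finset.Icc 1 (K - 1), τ (k + 1) ≤ τ k) (k : ℕ) (hk : 1 ≤ k) :
    k ≤ K → 1 ≤ Efun D τ k := by
  induction k, hk using Nat.le_induction with
  | base =>
    intro h
    have m : 1 ∈ Finset.Icc 1 K := by simp [h]
    have := hpos 1 m
    have := hτ 1 m
    rw [Efun_one, le_div_iff₀ (by linarith)]
    linarith [hle 1 m]
  | succ k hk ih =>
    intro h
    have m : k ∈ Finset.Icc 1 K := by simp; omega
    have m' : k + 1 ∈ Finset.Icc 1 K := by simp; omega
    have a := hτ k m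
    have a' := hτ (k + 1) m'
    have p := hpos (k + 1) m'
    have l := hle (k + 1) m'
    have t := hmono k (by simp; omega)
    rw [Efun_succ D τ k hk (by linarith)]
    refine one_le_mul_of_one_le_of_one_le (ih (by omega)) ?_
    rw [one_le_div (mul_pos (by linarith) (by linarith))]
    nlinarith [mul_nonneg (sub_nonneg.2 t) (sub_nonneg.2 l)]

/-- The telescoping bound `(1 + τ_k) / (K D_k) ≤ E_k` at `τ_k = (K - k) D_k`. -/
theorem one_le_mul_Efun (K : ℕ) (D τ : ℕ → ℝ) (hτ : ∀ k, τ k = ((K : ℝ) - k) * D k)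
    (hpos : ∀ k ∈ Finset.Icc 1 K, 0 < D k) (k : ℕ) (hk : 1 ≤ k) :
    k ≤ K → 1 + τ k ≤ K * D k * Efun D τ k := by
  have hτ0 : ∀ k ∈ Finset.Icc 1 K, 0 ≤ τ k := fun k hk => by
    rw [hτ]
    refine mul_nonneg (sub_nonneg.2 ?_) (hpos k hk).le
    exact_mod_cast (Finset.mem_Icc.1 hk).2
  induction k, hk using Nat.le_induction with
  | base =>
    intro h
    have m : 1 ∈ Finset.Icc 1 K := by simp [h]
    have p := hpos 1 m
    have e : D 1 + τ 1 = K * D 1 := by rw [hτ]; push_cast; ring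
    have q : (0 : ℝ) < K := by exact_mod_cast h
    rw [Efun_one, e, mul_div_cancel₀ _ (by positivity)]
  | succ k hk ih =>
    intro h
    have m : k ∈ Finset.Icc 1 K := by simp; omega
    have m' : k + 1 ∈ Finset.Icc 1 K := by simp; omega
    have a := hτ0 k m
    have a' := hτ0 (k + 1) m'
    have p := hpos k m
    have p' := hpos (k + 1) m'
    have c : (0 : ℝ) < K - k := sub_pos.2 (by exact_mod_cast h)
    have e : D (k + 1) + τ (k + 1) = (K - k) * D (k + 1) := by rw [hτ]; push_cast; ring
    have i := ih (by omega)
    have E0 : 0 ≤ Efun D τ k := by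
      have q : (0 : ℝ) < K * D k := mul_pos (by exact_mod_cast (by omega : 0 < K)) p
      by_contra! hn
      nlinarith
    rw [Efun_succ D τ k hk (by linarith), e]
    have s1 : (K : ℝ) * D (k + 1) * (Efun D τ k * ((1 + τ (k + 1)) * (D (k + 1) + τ k)
        / ((1 + τ k) * ((K - k) * D (k + 1)))))
        = (K * Efun D τ k * (D (k + 1) + τ k)) * (1 + τ (k + 1)) / ((1 + τ k) * (K - k)) := by
      have : 1 + τ k ≠ 0 := by linarith
      field_simp
    have s2 : (1 + τ k) * (K - k) ≤ K * Efun D τ k * (D (k + 1) + τ k) := by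
      calc (1 + τ k) * (K - k) ≤ (K * D k * Efun D τ k) * (K - k) := by gcongr
        _ = K * Efun D τ k * τ k := by rw [hτ]; ring
        _ ≤ _ := by gcongr; linarith
    rw [s1, le_div_iff₀ (mul_pos (by linarith) c), mul_comm]
    exact mul_le_mul_of_nonneg_right s2 (by linarith)

/-- **Arithmetic content of Corollary 3 (K-fold approximation).**
If `1 ≥ D_1 ≥ ⋯ ≥ D_K > 0` satisfies the parametrized outer bound, then with
`d_k = min(1, K D_k)` the vector `(d_1,…,d_K)` lies in the separation-based inner-bound
region `𝒟̂(P,b)`: it is in `(0,1]`, nonincreasing, and `∑_{k=1}^K ΔN_k d_k^{-1/b} ≤ P + N_1`. -/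
theorem corollary_three_K_fold
    (K : ℕ) (hK : 1 ≤ K)
    (N : ℕ → ℝ)
    (hNpos : ∀ k ∈ Finset.Icc 1 K, 0 < N k)
    (hNmono : ∀ k ∈ Finset.Icc 1 (K - 1), N (k + 1) ≤ N k)
    (hNlast : N (K + 1) = 0)
    (P : ℝ) (hP : 0 ≤ P) (b : ℝ) (hb : 0 < b)
    (D : ℕ → ℝ)
    (hD1 : D 1 ≤ 1)
    (hDpos : ∀ k ∈ Finset.Icc 1 K, 0 < D k)
    (hDmono : ∀ k ∈ Finset.Icc 1 (K - 1), D (k + 1) ≤ D k)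
    (hbound : ∀ τ : ℕ → ℝ, τ K = 0 →
      (∀ k ∈ Finset.Icc 1 (K - 1), τ (k + 1) ≤ τ k) →
      (∀ k ∈ Finset.Icc 1 K, 0 ≤ τ k) →
      ∑ k ∈ Finset.Icc 1 K, (N k - N (k + 1)) * (Efun D τ k) ^ (1 / b) ≤ P + N 1)
    (d : ℕ → ℝ) (hd : ∀ k, d k = min 1 ((K : ℝ) * D k)) :
    (d 1 ≤ 1) ∧
      (∀ k ∈ Finset.Icc 1 (K - 1), d (k + 1) ≤ d k) ∧
      (∀ k ∈ Finset.Icc 1 K, 0 < d k) ∧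
      ∑ k ∈ Finset.Icc 1 K, (N k - N (k + 1)) * (d k) ^ (-(1 / b)) ≤ P + N 1 := by
  have hDle : ∀ k ∈ Finset.Icc 1 K, D k ≤ 1 := by
    intro k hk
    obtain ⟨h1, h2⟩ := Finset.mem_Icc.1 hk
    clear hk
    induction k, h1 using Nat.le_induction with
    | base => exact hD1
    | succ k h1 ih => exact (hDmono k (by simp; omega)).trans (ih (by omega))
  have hKpos : (0 : ℝ) < K := by exact_mod_cast hK
  have hdpos : ∀ k ∈ Finset.Icc 1 K, 0 < d k := fun k hk => by
    rw [hd]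
    exact lt_min one_pos (mul_pos hKpos (hDpos k hk))
  refine ⟨by rw [hd]; exact min_le_left _ _, fun k hk => ?_, hdpos, ?_⟩
  · rw [hd, hd]
    exact min_le_min_left _ (mul_le_mul_of_nonneg_left (hDmono k hk) hKpos.le)
  set τ : ℕ → ℝ := fun k => ((K : ℝ) - k) * D k with hτ
  have hτ0 : ∀ k ∈ Finset.Icc 1 K, 0 ≤ τ k := fun k hk =>
    mul_nonneg (sub_nonneg.2 (by exact_mod_cast (Finset.mem_Icc.1 hk).2)) (hDpos k hk).le
  have hτm : ∀ k ∈ Finset.Icc 1 (K - 1), τ (k + 1) ≤ τ k := by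
    intro k hk
    have hk' := Finset.mem_Icc.1 hk
    have c : ((k + 1 : ℕ) : ℝ) ≤ K := by exact_mod_cast (by omega : k + 1 ≤ K)
    have p := hDpos (k + 1) (by simp; omega)
    refine mul_le_mul ?_ (hDmono k hk) p.le ?_ <;> push_cast at * <;> linarith
  refine le_trans (Finset.sum_le_sum fun k hk => ?_) (hbound τ (by simp [hτ]) hτm hτ0)
  obtain ⟨h1, h2⟩ := Finset.mem_Icc.1 hk
  have hΔ : 0 ≤ N k - N (k + 1) := by
    rcases h2.eq_or_lt with rfl | h2
    · rw [hNlast, sub_zero]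
      exact (hNpos _ hk).le
    · exact sub_nonneg.2 (hNmono k (by simp; omega))
  have hE : (d k)⁻¹ ≤ Efun D τ k := by
    have e1 := one_le_Efun K D τ hDpos hDle hτ0 hτm k h1 h2
    have e2 := one_le_mul_Efun K D τ (fun _ => rfl) hDpos k h1 h2
    rw [inv_le_iff_one_le_mul₀ (hdpos k hk), hd]
    rcases min_choice 1 ((K : ℝ) * D k) with h | h <;> rw [h] <;> linarith [hτ0 k hk]
  refine mul_le_mul_of_nonneg_left ?_ hΔ
  rw [Real.rpow_neg (hdpos k hk).le, ← Real.inv_rpow (hdpos k hk).le]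
  exact Real.rpow_le_rpow (inv_nonneg.2 (hdpos k hk).le) hE (by positivity)
end

section
/- (Basic properties of the relaxed distortion vector, stated after equation (15) of the paper.) Let 1 ≥ D_1 ≥ D_2 ≥ ⋯ ≥ D_K > 0 and let (D*_1,…,D*_K) and (B_1,…,B_K) be the associated relaxed distortion vector and binary labels. Then: (i) 1 ≥ D*_1 ≥ D*_2 ≥ ⋯ ≥ D*_K > 0; (ii) D*_k ≥ D_k for every k; and (iii) D*_k ≤ 2^{1+∑_{j=1}^{k−1} B_j}·D_k for every k. -/
/-!
The recursion says `D*_{k+1} = min (D*_k, 2 ^ (1 + S_k) * D_{k+1})` with `S_k = ∑_{j ≤ k} B_j`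
(`Dstar_succ`, `sum_Blabel`). The monotonicity of `D*` and the upper bound are the two halves of
`min_le`. The lower bound holds by induction on `k`, since both arguments of the minimum are at
least `D_{k+1}`: the first one by `D*_k ≥ D_k ≥ D_{k+1}` (for `k = 0`, by `D*_0 = 1 ≥ D_1`), the
second one because the power of two is at least `1`. Positivity follows from the lower bound.
-/

open Finset

/-- The recursion of equation (15): `relax D k = (D*_k, ∑_{j=1}^k B_j)`, with `D*_0 = 1`,
and for `k ≥ 1`: if `2^{1+∑_{j<k} B_j} D_k ≥ D*_{k-1}` then `(D*_k, B_k) = (D*_{k-1}, 0)`,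
otherwise `(D*_k, B_k) = (2^{1+∑_{j<k} B_j} D_k, 1)`. -/
noncomputable def relax (D : ℕ → ℝ) : ℕ → ℝ × ℕ
  | 0 => (1, 0)
  | k + 1 =>
    let p := relax D k
    if p.1 ≤ 2 ^ (1 + p.2) * D (k + 1) then (p.1, p.2)
    else (2 ^ (1 + p.2) * D (k + 1), p.2 + 1)

/-- The relaxed distortion `D*_k`. -/
noncomputable def Dstar (D : ℕ → ℝ) (k : ℕ) : ℝ := (relax D k).1

/-- The binary label `B_k`. -/
noncomputable def Blabel (D : ℕ → ℝ) (k : ℕ) : ℕ := (relax D k).2 - (relax D (k - 1)).2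

theorem Dstar_succ (D : ℕ → ℝ) (k : ℕ) :
    Dstar D (k + 1) = min (Dstar D k) (2 ^ (1 + (relax D k).2) * D (k + 1)) := by
  simp only [Dstar, relax]
  split_ifs with h
  · exact (min_eq_left h).symm
  · exact (min_eq_right (not_le.mp h).le).symm

/-- The second component of `relax` is nondecreasing, so the truncated subtraction defining
`Blabel` is a genuine difference. -/
theorem relax_snd_le_succ (D : ℕ → ℝ) (k : ℕ) : (relax D k).2 ≤ (relax D (k + 1)).2 := by
  simp only [relax]
  split_ifs <;> simp

theorem sum_Blabel (D : ℕ → ℝ) (k : ℕ) :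
    ∑ j ∈ Finset.Icc 1 k, Blabel D j = (relax D k).2 := by
  induction k with
  | zero => simp [relax]
  | succ k ih =>
    rw [Finset.sum_Icc_succ_top (by omega), ih, Blabel, Nat.add_sub_cancel]
    exact Nat.add_sub_cancel' (relax_snd_le_succ D k)

/-- **Basic properties of the relaxed distortion vector.**
For `1 ≥ D_1 ≥ ⋯ ≥ D_K > 0`:
(i) `1 ≥ D*_1 ≥ D*_2 ≥ ⋯ ≥ D*_K > 0`;
(ii) `D*_k ≥ D_k` for every `k`;
(iii) `D*_k ≤ 2^{1+∑_{j=1}^{k-1} B_j} D_k` for every `k`. -/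
theorem relaxed_distortion_basic
    (K : ℕ) (hK : 1 ≤ K) (D : ℕ → ℝ)
    (hD1 : D 1 ≤ 1)
    (hDpos : ∀ k ∈ Finset.Icc 1 K, 0 < D k)
    (hDmono : ∀ k ∈ Finset.Icc 1 (K - 1), D (k + 1) ≤ D k) :
    (Dstar D 1 ≤ 1) ∧
      (∀ k ∈ Finset.Icc 1 (K - 1), Dstar D (k + 1) ≤ Dstar D k) ∧
      (0 < Dstar D K) ∧
      (∀ k ∈ Finset.Icc 1 K, D k ≤ Dstar D k) ∧
      (∀ k ∈ Finset.Icc 1 K,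
        Dstar D k ≤ 2 ^ (1 + ∑ j ∈ Finset.Icc 1 (k - 1), Blabel D j) * D k) := by
  have lower : ∀ k, k + 1 ≤ K → D (k + 1) ≤ Dstar D (k + 1) := by
    intro k
    induction k with
    | zero =>
      intro hk
      have hpos := hDpos 1 (Finset.mem_Icc.mpr ⟨le_rfl, hk⟩)
      rw [Dstar_succ]
      refine le_min ?_ (le_mul_of_one_le_left hpos.le (one_le_pow₀ one_le_two))
      simpa [Dstar, relax] using hD1
    | succ k ih =>
      intro hk
      have hpos := hDpos (k + 1 + 1) (Finset.mem_Icc.mpr ⟨by omega, hk⟩)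
      have hmono := hDmono (k + 1) (Finset.mem_Icc.mpr ⟨by omega, by omega⟩)
      rw [Dstar_succ]
      exact le_min (hmono.trans (ih (by omega)))
        (le_mul_of_one_le_left hpos.le (one_le_pow₀ one_le_two))
  have lower' : ∀ k ∈ Finset.Icc 1 K, D k ≤ Dstar D k := by
    intro k hk
    obtain ⟨h1, h2⟩ := Finset.mem_Icc.mp hk
    obtain ⟨m, rfl⟩ := Nat.exists_eq_add_of_le' h1
    exact lower m h2
  have hKmem : K ∈ Finset.Icc 1 K := Finset.mem_Icc.mpr ⟨hK, le_rfl⟩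
  refine ⟨?_, ?_, (hDpos K hKmem).trans_le (lower' K hKmem), lower', ?_⟩
  · rw [Dstar_succ]
    exact min_le_left _ _
  · intro k _
    rw [Dstar_succ]
    exact min_le_left _ _
  · intro k hk
    obtain ⟨m, rfl⟩ := Nat.exists_eq_add_of_le' (Finset.mem_Icc.mp hk).1
    rw [Nat.add_sub_cancel, sum_Blabel, Dstar_succ]
    exact min_le_right _ _
end

section
/- (Approximate per-index lower bound for the τ-choice used in the proof of Proposition 1.) Let 1 ≥ D_1 ≥ D_2 ≥ ⋯ ≥ D_K > 0, let (D*_1,…,D*_K) be the associated relaxed distortion vector, and let ε ∈ (0,1). Then there exist reals τ_1 ≥ τ_2 ≥ ⋯ ≥ τ_{K−1} ≥ 0 (with τ_K := 0) such that E_k(D,τ) := (1+τ_k)·∏_{j=2}^k (D_j+τ_{j−1}) / ∏_{j=1}^k (D_j+τ_j) satisfies E_k(D,τ) ≥ (1−ε)/D*_k for every k ∈ {1,…,K}. -/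
/-!
Write `E_k = (1 + τ_k) Q_k` with `Q_k = ∏_{2≤j≤k} (D_j + τ_{j-1}) / ∏_{1≤j≤k} (D_j + τ_j)`, so that
`Q_{k+1} = Q_k (D_{k+1} + τ_k) / (D_{k+1} + τ_{k+1})`. With a fictitious `τ_0 = 1/ε` and
`Q_0 = 1/(1 + τ_0)` this remains true at `k = 0` as an inequality, because `D_1 ≤ 1`.

Choose `τ_k = τ_{k-1}` when `B_k = 0` and `τ_k = D_k` when `B_k = 1`, for `k < K`, and `τ_K = 0`.
If `B_k = 0`, then `τ_k` is unchanged and `Q_k ≥ Q_{k-1}`, so `E_k ≥ E_{k-1}`, while `D*_k = D*_{k-1}`.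
If `B_k = 1`, then `Q_k τ_k ≥ Q_{k-1} τ_{k-1} / 2`. Hence `Q_k τ_k ≥ (1 - ε) 2^{-(B_1 + ⋯ + B_k)}`
throughout, the factor `1 - ε` being a lower bound for `Q_0 τ_0 = 1/(1 + ε)`; at an index with
`B_k = 1` this gives `E_k ≥ Q_k ≥ (1 - ε) / (2^{B_1 + ⋯ + B_k} D_k) = (1 - ε) / D*_k`.
These invariants are `tauSeq_invariant`. Dropping `τ_K` to `0` can only increase `E_K`; that last
step is `final_step`.
-/

open Finset

/-- The sequence `τ` before its last term is set to `0`: it starts at `T`, keeps its value when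
`B_k = 0` and jumps to `D_k` when `B_k = 1`. -/
noncomputable def tauSeq (D : ℕ → ℝ) (T : ℝ) : ℕ → ℝ
  | 0 => T
  | k + 1 =>
    if (relax D k).1 ≤ 2 ^ (1 + (relax D k).2) * D (k + 1) then tauSeq D T k else D (k + 1)

/-- The quotient `E_k / (1 + τ_k)`, with the value `1 / (1 + τ_0)` at `k = 0`. -/
noncomputable def quot (D τ : ℕ → ℝ) (k : ℕ) : ℝ :=
  if k = 0 then 1 / (1 + τ 0) else
    (∏ j ∈ Finset.Icc 2 k, (D j + τ (j - 1))) / (∏ j ∈ Finset.Icc 1 k, (D j + τ j))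

lemma Efun_eq_quot (D τ : ℕ → ℝ) {k : ℕ} (hk : 1 ≤ k) :
    Efun D τ k = (1 + τ k) * quot D τ k := by
  rw [Efun, quot, if_neg (by omega), mul_div_assoc]

/-- For `k ≥ 1` this is an equality; at `k = 0` it uses `D 1 ≤ 1`. -/
lemma quot_succ_ge (D τ : ℕ → ℝ) (k : ℕ) (hD1 : D 1 ≤ 1) (hτ0 : 0 < τ 0)
    (hpos : 0 < D (k + 1) + τ (k + 1)) :
    quot D τ k * (D (k + 1) + τ k) ≤ quot D τ (k + 1) * (D (k + 1) + τ (k + 1)) := by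
  rcases Nat.eq_zero_or_pos k with rfl | hk
  · have h : quot D τ (0 + 1) * (D (0 + 1) + τ (0 + 1)) = 1 := by
      simp only [zero_add] at hpos
      simp [quot, hpos.ne']
    rw [h, quot, if_pos rfl, one_div_mul_eq_div, div_le_one (by linarith)]
    simpa using hD1
  · have h : quot D τ (k + 1) * (D (k + 1) + τ (k + 1)) = quot D τ k * (D (k + 1) + τ k) := by
      rw [quot, quot, if_neg (by omega), if_neg (by omega),
        Finset.prod_Icc_succ_top (by omega : 2 ≤ k + 1),
        Finset.prod_Icc_succ_top (by omega : 1 ≤ k + 1), Nat.add_sub_cancel,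
        mul_div_mul_comm, mul_assoc, div_mul_cancel₀ _ hpos.ne']
    exact h.ge

/-- Replacing `τ_{k-1} = t` by `τ_k = d = D_k` at most halves `Q τ`, so the bound survives when
the weight `p = 2^{B_1 + ⋯ + B_{k-1}}` doubles. -/
lemma half_step {c q t d q' p : ℝ} (hq : 0 < q) (hd : 0 < d) (hp : 0 < p)
    (h : c ≤ q * t * p) (hq' : q * (d + t) ≤ q' * (d + d)) :
    c ≤ q' * d * (p * 2) := by
  have h1 : q * (d + t) * p ≤ q' * (d + d) * p := mul_le_mul_of_nonneg_right hq' hp.le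
  have h2 : 0 < q * d * p := by positivity
  linarith

/-- The bound at the last index, where `τ` drops from `t` to `0`. -/
lemma final_step {D : ℕ → ℝ} {c q t q' : ℝ} {k : ℕ} (hq : 0 < q) (ht : 0 < t)
    (hd : 0 < D (k + 1)) (hd1 : D (k + 1) ≤ 1) (hc : 0 < c) (hs : 0 < Dstar D k)
    (ha : c ≤ q * t * 2 ^ (relax D k).2) (hb : c ≤ q * (1 + t) * Dstar D k)
    (hq' : q * (D (k + 1) + t) ≤ q' * D (k + 1)) :
    0 < Dstar D (k + 1) ∧ c ≤ q' * Dstar D (k + 1) := by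
  have hp : (0 : ℝ) < 2 ^ (relax D k).2 := by positivity
  by_cases hB : (relax D k).1 ≤ 2 ^ (1 + (relax D k).2) * D (k + 1)
  · have e : Dstar D (k + 1) = Dstar D k := by simp [Dstar, relax, hB]
    rw [e]
    refine ⟨hs, hb.trans (mul_le_mul_of_nonneg_right ?_ hs.le)⟩
    -- `E_K ≥ E_{K-1}`, since `(d + t) / d ≥ 1 + t` for `d ≤ 1`
    have h1 : q * t * D (k + 1) ≤ q * t := mul_le_of_le_one_right (by positivity) hd1
    refine le_of_mul_le_mul_right ?_ hd
    linarith
  · have e : Dstar D (k + 1) = 2 ^ (1 + (relax D k).2) * D (k + 1) := by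
      simp only [Dstar, relax, if_neg hB]
    rw [e, pow_add, pow_one]
    refine ⟨by positivity, ?_⟩
    have h1 := mul_le_mul_of_nonneg_right hq' hp.le
    have h2 : 0 < q * D (k + 1) * 2 ^ (relax D k).2 := by positivity
    linarith

/-- The invariants of the construction, for any `τ` that agrees with `tauSeq D T` below `K`. -/
lemma tauSeq_invariant {K : ℕ} {D τ : ℕ → ℝ} {T c : ℝ} (hT : 1 ≤ T) (hc : c * (1 + T) ≤ T)
    (hD1 : D 1 ≤ 1) (hDpos : ∀ k, 1 ≤ k → k ≤ K → 0 < D k)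
    (hDmono : ∀ k, 1 ≤ k → k < K → D (k + 1) ≤ D k)
    (hτ : ∀ k, k < K → τ k = tauSeq D T k) (k : ℕ) (hk : k < K) :
    0 < quot D τ k ∧ 0 < τ k ∧ D (k + 1) ≤ τ k ∧ 0 < Dstar D k ∧
      c ≤ quot D τ k * τ k * 2 ^ (relax D k).2 ∧
      c ≤ quot D τ k * (1 + τ k) * Dstar D k := by
  induction k with
  | zero =>
    have e : τ 0 = T := hτ 0 hk
    have hT' : 0 < 1 + T := by linarith
    have h1 : c ≤ T / (1 + T) := (le_div_iff₀ hT').2 hc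
    have h2 : T / (1 + T) ≤ 1 := (div_le_one hT').2 (by linarith)
    have eq : quot D τ 0 = 1 / (1 + T) := by simp [quot, e]
    rw [eq, e]
    refine ⟨by positivity, by linarith, by simpa using hD1.trans hT, by simp [Dstar, relax], ?_, ?_⟩
    · simpa [relax, div_eq_inv_mul] using h1
    · simpa [relax, Dstar, hT'.ne'] using h1.trans h2
  | succ k ih =>
    obtain ⟨hq, ht, hdt, hs, ha, hb⟩ := ih (by omega)
    have hd := hDpos (k + 1) (by omega) hk.le
    have hd' := hDmono (k + 1) (by omega) hk
    have e0 : 0 < τ 0 := by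
      rw [hτ 0 (by omega)]
      exact lt_of_lt_of_le one_pos hT
    have hstep := quot_succ_ge D τ k hD1 e0
    by_cases hB : (relax D k).1 ≤ 2 ^ (1 + (relax D k).2) * D (k + 1)
    · have et : τ (k + 1) = τ k := by
        rw [hτ _ hk, hτ k (by omega)]
        simp [tauSeq, hB]
      have es : Dstar D (k + 1) = Dstar D k := by simp [Dstar, relax, hB]
      have en : (relax D (k + 1)).2 = (relax D k).2 := by simp [relax, hB]
      rw [et] at hstep
      have hqq : quot D τ k ≤ quot D τ (k + 1) :=
        le_of_mul_le_mul_right (hstep (by linarith)) (by linarith)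
      rw [et, es, en]
      refine ⟨by linarith, ht, by linarith, hs, ha.trans ?_, hb.trans ?_⟩ <;> gcongr
    · have et : τ (k + 1) = D (k + 1) := by
        rw [hτ _ hk]
        simp only [tauSeq, if_neg hB]
      have es : Dstar D (k + 1) = 2 ^ (1 + (relax D k).2) * D (k + 1) := by
        simp only [Dstar, relax, if_neg hB]
      have en : (relax D (k + 1)).2 = (relax D k).2 + 1 := by simp only [relax, if_neg hB]
      rw [et] at hstep
      have hstep := hstep (by linarith)
      have hq' : 0 < quot D τ (k + 1) := by
        have : 0 < quot D τ k * (D (k + 1) + τ k) := by positivity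
        exact pos_of_mul_pos_left (this.trans_le hstep) (by linarith)
      have key := half_step hq hd (by positivity) ha hstep
      rw [et, es, en, pow_succ, pow_add, pow_one]
      refine ⟨hq', hd, hd', by positivity, key, ?_⟩
      have : 0 < quot D τ (k + 1) * D (k + 1) * (2 * 2 ^ (relax D k).2 * D (k + 1)) := by
        positivity
      linarith

/-- **Approximate per-index lower bound for the τ-choice used in the proof of Proposition 1.**
For `1 ≥ D_1 ≥ ⋯ ≥ D_K > 0` and `ε ∈ (0,1)` there exist `τ_1 ≥ ⋯ ≥ τ_{K-1} ≥ 0`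
(with `τ_K = 0`) such that `E_k(D,τ) ≥ (1-ε)/D*_k` for every `k ∈ {1,…,K}`. -/
theorem exists_tau_relaxed
    (K : ℕ) (hK : 1 ≤ K) (D : ℕ → ℝ)
    (hD1 : D 1 ≤ 1)
    (hDpos : ∀ k ∈ Finset.Icc 1 K, 0 < D k)
    (hDmono : ∀ k ∈ Finset.Icc 1 (K - 1), D (k + 1) ≤ D k)
    (ε : ℝ) (hε0 : 0 < ε) (hε1 : ε < 1) :
    ∃ τ : ℕ → ℝ, τ K = 0 ∧
      (∀ k ∈ Finset.Icc 1 (K - 1), τ (k + 1) ≤ τ k) ∧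
      (∀ k ∈ Finset.Icc 1 K, 0 ≤ τ k) ∧
      (∀ k ∈ Finset.Icc 1 K, Efun D τ k ≥ (1 - ε) / Dstar D k) := by
  have hDpos' : ∀ k, 1 ≤ k → k ≤ K → 0 < D k := fun k h1 h2 => hDpos k (by simp; omega)
  have hDmono' : ∀ k, 1 ≤ k → k < K → D (k + 1) ≤ D k := fun k h1 h2 =>
    hDmono k (by simp; omega)
  have hDle : ∀ k, 1 ≤ k → k ≤ K → D k ≤ 1 := by
    intro k h1
    induction k, h1 using Nat.le_induction with
    | base => exact fun _ => hD1
    | succ k h1 ih => exact fun h => (hDmono' k h1 (by omega)).trans (ih (by omega))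
  have hT : 1 ≤ 1 / ε := by rw [le_div_iff₀ hε0]; linarith
  have hcT : (1 - ε) * (1 + 1 / ε) ≤ 1 / ε := by
    have : (1 - ε) * (1 + 1 / ε) = 1 / ε - ε := by field_simp; ring
    linarith
  set τ : ℕ → ℝ := fun k => if k < K then tauSeq D (1 / ε) k else 0 with hτdef
  have hτ : ∀ k, k < K → τ k = tauSeq D (1 / ε) k := fun k hk => by simp [hτdef, hk]
  have hτK : τ K = 0 := by simp [hτdef]
  have inv := tauSeq_invariant hT hcT hD1 hDpos' hDmono' hτ
  refine ⟨τ, hτK, ?_, ?_, ?_⟩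
  · intro k hk
    rw [Finset.mem_Icc] at hk
    obtain ⟨-, ht, hdt, -⟩ := inv k (by omega)
    rcases Nat.lt_or_ge (k + 1) K with h | h
    · rw [hτ _ h, tauSeq, ← hτ k (by omega)]
      split_ifs
      · exact le_rfl
      · exact hdt
    · rw [show k + 1 = K by omega, hτK]
      exact ht.le
  · intro k hk
    rw [Finset.mem_Icc] at hk
    rcases hk.2.lt_or_eq with h | rfl
    · exact (inv k h).2.1.le
    · exact hτK.ge
  · intro k hk
    rw [Finset.mem_Icc] at hk
    rw [ge_iff_le, Efun_eq_quot D τ hk.1]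
    rcases hk.2.lt_or_eq with h | rfl
    · obtain ⟨-, -, -, hs, -, hb⟩ := inv k h
      rw [div_le_iff₀ hs]
      linarith
    · obtain ⟨m, rfl⟩ : ∃ m, k = m + 1 := ⟨k - 1, by omega⟩
      obtain ⟨hq, ht, -, hs, ha, hb⟩ := inv m (by omega)
      have hd := hDpos' (m + 1) hk.1 le_rfl
      have hstep := quot_succ_ge D τ m hD1 (inv 0 (by omega)).2.1 (by rw [hτK]; linarith)
      rw [hτK, add_zero] at hstep
      obtain ⟨hs', h⟩ := final_step hq ht hd (hDle _ hk.1 le_rfl) (by linarith) hs ha hb hstep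
      rw [hτK, div_le_iff₀ hs']
      linarith
end

section
/- (Arithmetic content of Proposition 1: the relaxed distortion vector is achievable by separation.) Let 1 ≥ D_1 ≥ D_2 ≥ ⋯ ≥ D_K > 0 satisfy the parametrized outer bound, and let (D*_1,…,D*_K) be the associated relaxed distortion vector. Then (D*_1,…,D*_K) lies in the separation-based inner-bound region 𝒟̂(P,b): that is, 1 ≥ D*_1 ≥ ⋯ ≥ D*_K > 0 and ∑_{k=1}^K ΔN_k · (D*_k)^{−1/b} ≤ P + N_1. -/
open Finset

/-- The parameter `τ_k` adapted to the relaxation: `t` before the first label `1`, and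
`D*_k / 2^{B_1 + ⋯ + B_k}` from then on. The constraint `τ_K = 0` is not imposed here. -/
noncomputable def tilt (D : ℕ → ℝ) (t : ℝ) (k : ℕ) : ℝ :=
  if (relax D k).2 = 0 then t else (relax D k).1 / 2 ^ (relax D k).2

/-- The factor `G_k` in `E_k = (1 + τ_k) G_k`. -/
noncomputable def Gfun (D τ : ℕ → ℝ) (k : ℕ) : ℝ :=
  (∏ j ∈ Finset.Icc 2 k, (D j + τ (j - 1))) / (∏ j ∈ Finset.Icc 1 k, (D j + τ j))

lemma Efun_eq (D τ : ℕ → ℝ) (k : ℕ) : Efun D τ k = (1 + τ k) * Gfun D τ k := by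
  unfold Efun Gfun
  rw [mul_div_assoc]

lemma Gfun_one (D τ : ℕ → ℝ) : Gfun D τ 1 = 1 / (D 1 + τ 1) := by
  simp [Gfun]

lemma Gfun_succ (D τ : ℕ → ℝ) {k : ℕ} (hk : 1 ≤ k) :
    Gfun D τ (k + 1) = Gfun D τ k * ((D (k + 1) + τ k) / (D (k + 1) + τ (k + 1))) := by
  unfold Gfun
  rw [Finset.prod_Icc_succ_top (by omega), Finset.prod_Icc_succ_top (by omega),
    Nat.add_sub_cancel, mul_div_mul_comm]

lemma relax_succ_keep {D : ℕ → ℝ} {k : ℕ}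
    (h : (relax D k).1 ≤ 2 ^ (1 + (relax D k).2) * D (k + 1)) :
    relax D (k + 1) = relax D k := by
  simp [relax, h]

lemma relax_succ_jump {D : ℕ → ℝ} {k : ℕ}
    (h : ¬ (relax D k).1 ≤ 2 ^ (1 + (relax D k).2) * D (k + 1)) :
    relax D (k + 1) = (2 ^ (1 + (relax D k).2) * D (k + 1), (relax D k).2 + 1) := by
  simp [relax, h]

lemma tilt_succ_keep {D : ℕ → ℝ} {k : ℕ} (t : ℝ)
    (h : (relax D k).1 ≤ 2 ^ (1 + (relax D k).2) * D (k + 1)) :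
    tilt D t (k + 1) = tilt D t k := by
  simp only [tilt, relax_succ_keep h]

lemma tilt_succ_jump {D : ℕ → ℝ} {k : ℕ} (t : ℝ)
    (h : ¬ (relax D k).1 ≤ 2 ^ (1 + (relax D k).2) * D (k + 1)) :
    tilt D t (k + 1) = D (k + 1) := by
  simp only [tilt, relax_succ_jump h, Nat.succ_ne_zero, if_false]
  rw [add_comm 1]
  field_simp

lemma Dstar_succ_le (D : ℕ → ℝ) (k : ℕ) : Dstar D (k + 1) ≤ Dstar D k := by
  unfold Dstar
  by_cases h : (relax D k).1 ≤ 2 ^ (1 + (relax D k).2) * D (k + 1)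
  · rw [relax_succ_keep h]
  · rw [relax_succ_jump h]
    exact (not_le.mp h).le

lemma Dstar_pos {D : ℕ → ℝ} {K : ℕ} (hD : ∀ k, 1 ≤ k → k ≤ K → 0 < D k) :
    ∀ k ≤ K, 0 < Dstar D k := by
  intro k
  induction k with
  | zero => intro _; simp [Dstar, relax]
  | succ k ih =>
    intro hk
    have h0 := ih (by omega)
    have hD' := hD (k + 1) (by omega) hk
    unfold Dstar at *
    by_cases h : (relax D k).1 ≤ 2 ^ (1 + (relax D k).2) * D (k + 1)
    · rwa [relax_succ_keep h]
    · rw [relax_succ_jump h]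
      positivity

lemma tilt_succ_le {D : ℕ → ℝ} {t : ℝ} {k : ℕ} (hDt : D (k + 1) ≤ t) (hD : 0 ≤ D (k + 1)) :
    tilt D t (k + 1) ≤ tilt D t k := by
  by_cases h : (relax D k).1 ≤ 2 ^ (1 + (relax D k).2) * D (k + 1)
  · rw [tilt_succ_keep t h]
  · rw [tilt_succ_jump t h]
    unfold tilt
    split_ifs
    · exact hDt
    · rw [le_div_iff₀ (by positivity)]
      have hp : (0 : ℝ) ≤ 2 ^ (relax D k).2 * D (k + 1) := by positivity
      rw [pow_add] at h
      linarith

lemma le_tilt {D : ℕ → ℝ} {t δ : ℝ} {K : ℕ} (hδt : δ ≤ t)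
    (hD : ∀ k, 1 ≤ k → k ≤ K → δ ≤ D k) : ∀ k ≤ K, δ ≤ tilt D t k := by
  intro k
  induction k with
  | zero => intro _; simpa [tilt, relax] using hδt
  | succ k ih =>
    intro hk
    by_cases h : (relax D k).1 ≤ 2 ^ (1 + (relax D k).2) * D (k + 1)
    · rw [tilt_succ_keep t h]; exact ih (by omega)
    · rw [tilt_succ_jump t h]; exact hD _ (by omega) hk

/-- Inductive invariant for `τ = tilt D (1 / δ)`, where `δ` (in the application `D_K`) is a
positive lower bound for the `D_k`: before the first label `1` the quantities `D*_k` and `G_k`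
are explicit, and afterwards `(1 + δ) D*_k G_k ≥ 1`. -/
lemma relax_invariant {D : ℕ → ℝ} {δ : ℝ} {K : ℕ} (hδ : 0 < δ) (hD1 : D 1 ≤ 1)
    (hD : ∀ k, 1 ≤ k → k ≤ K → δ ≤ D k) (k : ℕ) (hk : 1 ≤ k) : k ≤ K →
    ((relax D k).2 = 0 → Dstar D k = 1 ∧ Gfun D (tilt D (1 / δ)) k = 1 / (D 1 + 1 / δ)) ∧
    ((relax D k).2 ≠ 0 → 1 ≤ (1 + δ) * (Dstar D k * Gfun D (tilt D (1 / δ)) k)) := by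
  induction k, hk using Nat.le_induction with
  | base =>
    intro hK
    have hDp : 0 < D 1 := hδ.trans_le (hD 1 le_rfl hK)
    by_cases h : (relax D 0).1 ≤ 2 ^ (1 + (relax D 0).2) * D (0 + 1)
    · have e : relax D 1 = (1, 0) := relax_succ_keep h
      simp [Gfun_one, tilt, Dstar, e]
    · have e : relax D 1 = (2 * D 1, 1) := by
        simpa [relax] using relax_succ_jump h
      have hG : 2 * D 1 * (1 / (D 1 + D 1)) = 1 := by field_simp; norm_num
      have hτ : tilt D (1 / δ) 1 = D 1 := tilt_succ_jump _ h
      simp only [Gfun_one, hτ, Dstar, e, hG]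
      refine ⟨fun h => absurd h (by norm_num), fun _ => by linarith⟩
  | succ k hk ih =>
    intro hK
    obtain ⟨ih0, ih1⟩ := ih (by omega)
    have hd : δ ≤ D (k + 1) := hD _ (by omega) hK
    have hDp : 0 < D (k + 1) := hδ.trans_le hd
    have hD1p : 0 < D 1 := hδ.trans_le (hD 1 le_rfl (by omega))
    have hδt : δ ≤ 1 / δ := by
      rw [le_div_iff₀ hδ]
      have : δ ≤ 1 := (hD 1 le_rfl (by omega)).trans hD1
      nlinarith
    have hτ : δ ≤ tilt D (1 / δ) k := le_tilt hδt hD k (by omega)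
    by_cases h : (relax D k).1 ≤ 2 ^ (1 + (relax D k).2) * D (k + 1)
    · have hG : Gfun D (tilt D (1 / δ)) (k + 1) = Gfun D (tilt D (1 / δ)) k := by
        rw [Gfun_succ _ _ hk, tilt_succ_keep _ h, div_self (by linarith), mul_one]
      have hs : Dstar D (k + 1) = Dstar D k := by simp only [Dstar, relax_succ_keep h]
      rw [hG, hs, relax_succ_keep h]
      exact ⟨ih0, ih1⟩
    · rw [Gfun_succ _ _ hk, tilt_succ_jump _ h]
      simp only [Dstar, relax_succ_jump h]
      refine ⟨fun h => absurd h (Nat.succ_ne_zero _), fun _ => ?_⟩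
      have e : 2 ^ (1 + (relax D k).2) * D (k + 1) * (Gfun D (tilt D (1 / δ)) k *
          ((D (k + 1) + tilt D (1 / δ) k) / (D (k + 1) + D (k + 1)))) =
          2 ^ (relax D k).2 * (D (k + 1) + tilt D (1 / δ) k) * Gfun D (tilt D (1 / δ)) k := by
        rw [pow_add]
        field_simp
        ring
      rw [e]
      by_cases hs : (relax D k).2 = 0
      · have ht : tilt D (1 / δ) k = 1 / δ := by simp only [tilt, hs, if_true]
        rw [(ih0 hs).2, ht, hs, pow_zero, one_mul, mul_one_div, ← mul_div_assoc,
          le_div_iff₀ (by positivity)]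
        have h1 : δ * (1 / δ) = 1 := by field_simp
        nlinarith [mul_pos hδ hDp]
      · have hpos : 0 < Dstar D k :=
          Dstar_pos (fun j h1 h2 => hδ.trans_le (hD j h1 h2)) k (by omega)
        have hGp : 0 ≤ Gfun D (tilt D (1 / δ)) k := by
          by_contra! hneg
          nlinarith [ih1 hs, mul_pos hpos (neg_pos.mpr hneg),
            mul_pos hδ (mul_pos hpos (neg_pos.mpr hneg))]
        have ht : 2 ^ (relax D k).2 * tilt D (1 / δ) k = Dstar D k := by
          simp only [tilt, hs, if_false, Dstar]
          field_simp
        refine (ih1 hs).trans ?_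
        gcongr
        rw [mul_add, ht]
        have : 0 ≤ 2 ^ (relax D k).2 * D (k + 1) := by positivity
        linarith

/-- Lowering the last parameter to `0` can only increase `E_k`, for every `k ≤ K`. -/
lemma Efun_le_update {D σ : ℕ → ℝ} {K : ℕ} (hD1 : ∀ k, 1 ≤ k → k ≤ K → D k ≤ 1)
    (hD : ∀ k, 1 ≤ k → k ≤ K → 0 < D k) (hσ : ∀ k ≤ K, 0 ≤ σ k) (k : ℕ) (hk : 1 ≤ k)
    (hkK : k ≤ K) : Efun D σ k ≤ Efun D (Function.update σ K 0) k := by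
  obtain ⟨m, rfl⟩ : ∃ m, k = m + 1 := ⟨k - 1, by omega⟩
  have hu : ∀ j, j ≤ m → Function.update σ K 0 j = σ j := fun j hj =>
    Function.update_of_ne (by omega) _ _
  -- `E_{m+1}` is `(1 + τ_{m+1}) / (D_{m+1} + τ_{m+1})` times a factor in `τ_1, …, τ_m` only
  have hsplit : ∀ τ : ℕ → ℝ, Efun D τ (m + 1) =
      (∏ j ∈ Finset.Icc 2 (m + 1), (D j + τ (j - 1))) / (∏ j ∈ Finset.Icc 1 m, (D j + τ j)) *
        ((1 + τ (m + 1)) / (D (m + 1) + τ (m + 1))) := by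
    intro τ
    unfold Efun
    rw [Finset.prod_Icc_succ_top (by omega : 1 ≤ m + 1), mul_comm (1 + τ (m + 1)), mul_div_mul_comm]
  have e1 : ∏ j ∈ Finset.Icc 2 (m + 1), (D j + Function.update σ K 0 (j - 1)) =
      ∏ j ∈ Finset.Icc 2 (m + 1), (D j + σ (j - 1)) :=
    Finset.prod_congr rfl fun j hj => by
      rw [Finset.mem_Icc] at hj
      rw [hu _ (by omega)]
  have e2 : ∏ j ∈ Finset.Icc 1 m, (D j + Function.update σ K 0 j) =
      ∏ j ∈ Finset.Icc 1 m, (D j + σ j) :=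
    Finset.prod_congr rfl fun j hj => by
      rw [Finset.mem_Icc] at hj
      rw [hu _ (by omega)]
  rw [hsplit, hsplit, e1, e2]
  refine mul_le_mul_of_nonneg_left ?_ (div_nonneg ?_ ?_)
  · have hd := hD (m + 1) hk hkK
    have hs := hσ (m + 1) hkK
    by_cases hm : m + 1 = K
    · have h1 := hD1 (m + 1) hk hkK
      rw [← hm, Function.update_self, div_le_div_iff₀ (by linarith) (by linarith)]
      nlinarith
    · rw [Function.update_of_ne hm]
  · refine Finset.prod_nonneg fun j hj => ?_
    rw [Finset.mem_Icc] at hj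
    exact add_nonneg (hD j (by omega) (by omega)).le (hσ _ (by omega))
  · refine Finset.prod_nonneg fun j hj => ?_
    rw [Finset.mem_Icc] at hj
    exact add_nonneg (hD j (by omega) (by omega)).le (hσ _ (by omega))

/-- **Arithmetic content of Proposition 1: the relaxed distortion vector is achievable by
separation.** If `1 ≥ D_1 ≥ ⋯ ≥ D_K > 0` satisfies the parametrized outer bound, then the
relaxed distortion vector `(D*_1,…,D*_K)` lies in the separation-based inner-bound region
`𝒟̂(P,b)`: it is in `(0,1]`, nonincreasing, and `∑_{k=1}^K ΔN_k (D*_k)^{-1/b} ≤ P + N_1`. -/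
theorem proposition_one_relaxed_achievable
    (K : ℕ) (hK : 1 ≤ K)
    (N : ℕ → ℝ)
    (hNpos : ∀ k ∈ Finset.Icc 1 K, 0 < N k)
    (hNmono : ∀ k ∈ Finset.Icc 1 (K - 1), N (k + 1) ≤ N k)
    (hNlast : N (K + 1) = 0)
    (P : ℝ) (hP : 0 ≤ P) (b : ℝ) (hb : 0 < b)
    (D : ℕ → ℝ)
    (hD1 : D 1 ≤ 1)
    (hDpos : ∀ k ∈ Finset.Icc 1 K, 0 < D k)
    (hDmono : ∀ k ∈ Finset.Icc 1 (K - 1), D (k + 1) ≤ D k)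
    (hbound : ∀ τ : ℕ → ℝ, τ K = 0 →
      (∀ k ∈ Finset.Icc 1 (K - 1), τ (k + 1) ≤ τ k) →
      (∀ k ∈ Finset.Icc 1 K, 0 ≤ τ k) →
      ∑ k ∈ Finset.Icc 1 K, (N k - N (k + 1)) * (Efun D τ k) ^ (1 / b) ≤ P + N 1) :
    (Dstar D 1 ≤ 1) ∧
      (∀ k ∈ Finset.Icc 1 (K - 1), Dstar D (k + 1) ≤ Dstar D k) ∧
      (∀ k ∈ Finset.Icc 1 K, 0 < Dstar D k) ∧
      ∑ k ∈ Finset.Icc 1 K, (N k - N (k + 1)) * (Dstar D k) ^ (-(1 / b)) ≤ P + N 1 := by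
  have hDK : 0 < D K := hDpos K (by simp [hK])
  have hanti : ∀ i j, 1 ≤ i → i ≤ j → j ≤ K → D j ≤ D i := by
    intro i j hi hij
    induction j, hij using Nat.le_induction with
    | base => intro _; exact le_rfl
    | succ j hij ih =>
      intro hj
      exact (hDmono j (by rw [Finset.mem_Icc]; omega)).trans (ih (by omega))
  have hDle : ∀ k, 1 ≤ k → k ≤ K → D K ≤ D k := fun k h1 h2 => hanti k K h1 h2 le_rfl
  have hD1' : ∀ k, 1 ≤ k → k ≤ K → D k ≤ 1 := fun k h1 h2 => (hanti 1 k le_rfl h1 h2).trans hD1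
  have hDp : ∀ k, 1 ≤ k → k ≤ K → 0 < D k := fun k h1 h2 => hDK.trans_le (hDle k h1 h2)
  have h1t : 1 ≤ 1 / D K := by
    rw [le_div_iff₀ hDK]
    linarith [hD1' K hK le_rfl]
  set σ := tilt D (1 / D K) with hσdef
  have hσK : ∀ k ≤ K, D K ≤ σ k := le_tilt ((hD1' K hK le_rfl).trans h1t) hDle
  have hpos := Dstar_pos hDp
  -- the invariant gives `D*_k E_k ≥ 1` before truncation at `K`
  have hE : ∀ k, 1 ≤ k → k ≤ K → (Dstar D k)⁻¹ ≤ Efun D σ k := by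
    intro k h1 h2
    obtain ⟨i0, i1⟩ := relax_invariant hDK hD1 hDle k h1 h2
    rw [← hσdef] at i0 i1
    have hp := hpos k h2
    rw [Efun_eq, inv_le_iff_one_le_mul₀ hp]
    by_cases hs : (relax D k).2 = 0
    · have ht : σ k = 1 / D K := by simp only [hσdef, tilt, hs, if_true]
      rw [(i0 hs).1, (i0 hs).2, ht, mul_one, mul_one_div,
        le_div_iff₀ (by linarith [hDp 1 le_rfl hK])]
      linarith
    · have hi := i1 hs
      have hx : 0 < Dstar D k * Gfun D σ k := by
        by_contra! hneg
        nlinarith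
      nlinarith [hσK k h2]
  have hτ := hbound (Function.update σ K 0) (by simp) (by
      intro k hk
      rw [Finset.mem_Icc] at hk
      rw [Function.update_of_ne (by omega : k ≠ K)]
      by_cases h : k + 1 = K
      · rw [h, Function.update_self]
        exact hDK.le.trans (hσK k (by omega))
      · rw [Function.update_of_ne h]
        exact tilt_succ_le ((hD1' _ (by omega) (by omega)).trans h1t)
          (hDp _ (by omega) (by omega)).le) (by
      intro k hk
      rw [Finset.mem_Icc] at hk
      by_cases h : k = K
      · rw [h, Function.update_self]
      · rw [Function.update_of_ne h]
        exact hDK.le.trans (hσK k hk.2))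
  refine ⟨by simpa [Dstar, relax] using Dstar_succ_le D 0, fun k _ => Dstar_succ_le D k,
    fun k hk => hpos k (Finset.mem_Icc.mp hk).2, le_trans (Finset.sum_le_sum fun k hk => ?_) hτ⟩
  rw [Finset.mem_Icc] at hk
  have hN : 0 ≤ N k - N (k + 1) := by
    by_cases h : k = K
    · rw [h, hNlast, sub_zero]
      exact (hNpos K (by simp [hK])).le
    · exact sub_nonneg.mpr (hNmono k (by rw [Finset.mem_Icc]; omega))
  have hp := hpos k hk.2
  refine mul_le_mul_of_nonneg_left ?_ hN
  rw [Real.rpow_neg hp.le, ← Real.inv_rpow hp.le]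
  exact Real.rpow_le_rpow (inv_nonneg.mpr hp.le) ((hE k hk.1 hk.2).trans
    (Efun_le_update hD1' hDp (fun k hk => hDK.le.trans (hσK k hk)) k hk.1 hk.2)) (by positivity)
end

section
/- (The half-bit-reduced rates of equation (16) satisfy the Gaussian broadcast capacity-region inequality (19).) Let K ≥ 1, let N_1 ≥ N_2 ≥ ⋯ ≥ N_K > 0 and P ≥ 0. Define c_0 := 1 and c_k := 1 + P/N_k for k = 1,…,K, and define the rates R_k := max( (1/2)·log₂ c_k − (1/2)·log₂ c_{k−1} − 1/2 , 0 ) for k = 1,…,K. Then ∑_{k=1}^K ΔN_k · 2^{2·∑_{j=1}^k R_j} ≤ P + N_1. -/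
/-!
Put `A k = 2 ^ (2 * (R 1 + ⋯ + R k))`, so that `A 0 = 1` and `A k = A (k-1) * q k` with
`q k = max (c k / (2 * c (k-1))) 1`. Summation by parts turns the left-hand side into
`N 1 + ∑ k, N k * (A k - A (k-1))`, so the increments have to add up to at most `P`.
The ratio `t k = A k / c k` starts at `1`, never increases, and is halved whenever `q k ≠ 1`.
At such a step
`N k * (A k - A (k-1)) = t k * (N k * c k - 2 * N k * c (k-1)) ≤ t k * P = P * (t (k-1) - t k)`,
because `N k * c k = N k + P` and `c (k-1) ≥ 1`; at all other steps the increment is zero.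
`increment_le` is this step; hence the increments telescope to at most `P * (1 - t K) ≤ P`.
-/

open Finset

/-- A clipped half-bit-reduced rate contributes a factor to `2 ^ (2 * ∑ R)` that is either `1` or
exactly half of the ratio `c' / c`. -/
lemma two_rpow_half_bit_rate {c c' : ℝ} (hc : 0 < c) (hc' : 0 < c') :
    (2 : ℝ) ^ (2 * max ((1 / 2) * Real.logb 2 c' - (1 / 2) * Real.logb 2 c - 1 / 2) 0) = 1 ∨
    (2 : ℝ) ^ (2 * max ((1 / 2) * Real.logb 2 c' - (1 / 2) * Real.logb 2 c - 1 / 2) 0)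
      = c' / (2 * c) := by
  rcases max_choice ((1 / 2) * Real.logb 2 c' - (1 / 2) * Real.logb 2 c - 1 / 2) 0 with h | h
  · right
    rw [h, show 2 * ((1 / 2) * Real.logb 2 c' - (1 / 2) * Real.logb 2 c - 1 / 2)
      = Real.logb 2 c' - Real.logb 2 c - 1 by ring,
      Real.rpow_sub two_pos, Real.rpow_sub two_pos, Real.rpow_one,
      Real.rpow_logb two_pos (by norm_num) hc', Real.rpow_logb two_pos (by norm_num) hc]
    field_simp
  · left
    rw [h]
    simp

/-- One step of the telescoping bound: the increment `n * (a * q - a)` is paid for by the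
decrease of `P * A / c`. -/
lemma increment_le {P n a c c' q : ℝ} (hP : 0 ≤ P) (hn : 0 < n) (ha : 0 ≤ a) (hc : 1 ≤ c)
    (hcc : c ≤ c') (hnc : n * c' = n + P) (hq : q = 1 ∨ q = c' / (2 * c)) :
    n * (a * q - a) ≤ P * (a / c - a * q / c') := by
  have hc0 : 0 < c := by linarith
  have hc0' : 0 < c' := by linarith
  rcases hq with rfl | rfl
  · have : a / c' ≤ a / c := by gcongr
    have := mul_nonneg hP (sub_nonneg.2 this)
    simpa using this
  · have h1 : n * (a * (c' / (2 * c)) - a) = (a / (2 * c)) * (n * c' - 2 * (n * c)) := by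
      field_simp
    have h2 : P * (a / c - a * (c' / (2 * c)) / c') = (a / (2 * c)) * P := by
      field_simp
      ring
    rw [h1, h2]
    have : n ≤ n * c := le_mul_of_one_le_right hn.le hc
    gcongr
    linarith

/-- **The half-bit-reduced rates of equation (16) satisfy the Gaussian broadcast
capacity-region inequality (19).** With `c_0 = 1`, `c_k = 1 + P/N_k`, and
`R_k = max((1/2) log₂ c_k − (1/2) log₂ c_{k-1} − 1/2, 0)`, we have
`∑_{k=1}^K ΔN_k 2^{2 ∑_{j=1}^k R_j} ≤ P + N_1`, where `ΔN_k = N_k − N_{k+1}`, `N_{K+1} = 0`. -/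
theorem half_bit_rates_in_capacity_region
    (K : ℕ) (hK : 1 ≤ K)
    (N : ℕ → ℝ)
    (hNpos : ∀ k ∈ Finset.Icc 1 K, 0 < N k)
    (hNmono : ∀ k ∈ Finset.Icc 1 (K - 1), N (k + 1) ≤ N k)
    (hNlast : N (K + 1) = 0)
    (P : ℝ) (hP : 0 ≤ P)
    (c : ℕ → ℝ) (hc0 : c 0 = 1)
    (hc : ∀ k ∈ Finset.Icc 1 K, c k = 1 + P / N k)
    (R : ℕ → ℝ)
    (hR : ∀ k ∈ Finset.Icc 1 K,
      R k = max ((1 / 2) * Real.logb 2 (c k) - (1 / 2) * Real.logb 2 (c (k - 1)) - 1 / 2) 0) :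
    ∑ k ∈ Finset.Icc 1 K, (N k - N (k + 1)) *
        (2 : ℝ) ^ (2 * ∑ j ∈ Finset.Icc 1 k, R j) ≤ P + N 1 := by
  have hc1 : ∀ k ≤ K, 1 ≤ c k := by
    intro k hk
    rcases Nat.eq_zero_or_pos k with rfl | h0
    · exact hc0.ge
    · have hm : k ∈ Finset.Icc 1 K := Finset.mem_Icc.2 ⟨h0, hk⟩
      have := div_nonneg hP (hNpos k hm).le
      rw [hc k hm]
      linarith
  have hcmono : ∀ k, k + 1 ≤ K → c k ≤ c (k + 1) := by
    intro k hk
    rcases Nat.eq_zero_or_pos k with rfl | h0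
    · rw [hc0]
      exact hc1 _ hk
    · have hm : k ∈ Finset.Icc 1 K := Finset.mem_Icc.2 ⟨h0, by omega⟩
      have hm' : k + 1 ∈ Finset.Icc 1 K := Finset.mem_Icc.2 ⟨by omega, hk⟩
      have hN := hNmono k (Finset.mem_Icc.2 ⟨h0, by omega⟩)
      have := hNpos _ hm'
      rw [hc k hm, hc _ hm']
      gcongr
  have key : ∀ n ≤ K, ∑ k ∈ Finset.Icc 1 n, (N k - N (k + 1)) *
        (2 : ℝ) ^ (2 * ∑ j ∈ Finset.Icc 1 k, R j) ≤
      N 1 + P * (1 - (2 : ℝ) ^ (2 * ∑ j ∈ Finset.Icc 1 n, R j) / c n)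
        - N (n + 1) * (2 : ℝ) ^ (2 * ∑ j ∈ Finset.Icc 1 n, R j) := by
    intro n
    induction n with
    | zero =>
      intro _
      simp [hc0]
    | succ n ih =>
      intro hn
      have hm : n + 1 ∈ Finset.Icc 1 K := Finset.mem_Icc.2 ⟨by omega, hn⟩
      have ih := ih (by omega)
      have hpos := hNpos _ hm
      have hq := two_rpow_half_bit_rate (c := c n) (c' := c (n + 1))
        (by linarith [hc1 n (by omega)]) (by linarith [hc1 _ hn])
      have hRn := hR _ hm
      rw [Nat.add_sub_cancel] at hRn
      rw [← hRn] at hq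
      have hA : (2 : ℝ) ^ (2 * ∑ j ∈ Finset.Icc 1 (n + 1), R j)
          = (2 : ℝ) ^ (2 * ∑ j ∈ Finset.Icc 1 n, R j) * (2 : ℝ) ^ (2 * R (n + 1)) := by
        rw [Finset.sum_Icc_succ_top (by omega), mul_add, Real.rpow_add two_pos]
      have hnc : N (n + 1) * c (n + 1) = N (n + 1) + P := by
        rw [hc _ hm]
        field_simp
      have step := increment_le (a := (2 : ℝ) ^ (2 * ∑ j ∈ Finset.Icc 1 n, R j)) hP hpos
        (by positivity) (hc1 n (by omega)) (hcmono n hn) hnc hq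
      rw [Finset.sum_Icc_succ_top (by omega), hA]
      linarith
  have hfin := key K le_rfl
  have hcK := hc1 K le_rfl
  have : 0 ≤ P * ((2 : ℝ) ^ (2 * ∑ j ∈ Finset.Icc 1 K, R j) / c K) := by positivity
  rw [hNlast] at hfin
  linarith
end
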